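/- Assume the Continuum Hypothesis. If X is a productively Lindelöf topological space such that the Lindelöf number of X^ω is at most 𝔠, then X is powerfully Lindelöf. -/

import Mathlib

open Set Cardinal Topology

universe u v

/-- A space is quasi-Lindelöf if every open cover has a countable subcover
(no separation axioms assumed). -/
def QuasiLindelofSp (X : Type u) [TopologicalSpace X] : Prop :=
  ∀ 𝒰 : Set (Set X), (∀ U ∈ 𝒰, IsOpen U) → ⋃₀ 𝒰 = Set.univ →
    ∃ 𝒱 ⊆ 𝒰, 𝒱.Countable ∧ ⋃₀ 𝒱 = Set.univ

/-- Lindelöf in the sense of Engelking: regular (T3, including T1) and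
every open cover has a countable subcover. -/
def EngLindelofSp (X : Type u) [TopologicalSpace X] : Prop :=
  RegularSpace X ∧ T1Space X ∧ QuasiLindelofSp X

/-- X is productively Lindelöf if X × Y is Lindelöf for every Lindelöf space Y. -/
def ProductivelyLindelofSp (X : Type u) [TopologicalSpace X] : Prop :=
  ∀ (Y : Type u) [TopologicalSpace Y], EngLindelofSp Y → EngLindelofSp (X × Y)

/-- X is productively quasi-Lindelöf if X × Y is quasi-Lindelöf for every Lindelöf space Y. -/
def ProductivelyQuasiLindelofSp (X : Type u) [TopologicalSpace X] : Prop :=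
  ∀ (Y : Type u) [TopologicalSpace Y], EngLindelofSp Y → QuasiLindelofSp (X × Y)

/-- X is powerfully Lindelöf if X^ω is Lindelöf. -/
def PowerfullyLindelofSp (X : Type u) [TopologicalSpace X] : Prop :=
  EngLindelofSp (ℕ → X)

/-- X is powerfully quasi-Lindelöf if X^ω is quasi-Lindelöf. -/
def PowerfullyQuasiLindelofSp (X : Type u) [TopologicalSpace X] : Prop :=
  QuasiLindelofSp (ℕ → X)

/-- Tightness of X is at most κ. -/
def TightnessLE (X : Type u) [TopologicalSpace X] (κ : Cardinal.{u}) : Prop :=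
  ∀ (A : Set X) (x : X), x ∈ closure A → ∃ B ⊆ A, #B ≤ κ ∧ x ∈ closure B

/-- X has countable tightness. -/
def CountableTightness (X : Type u) [TopologicalSpace X] : Prop :=
  ∀ (A : Set X) (x : X), x ∈ closure A → ∃ B ⊆ A, B.Countable ∧ x ∈ closure B

/-- The Lindelöf number of X is at most κ: every open cover has a subcover of size ≤ κ. -/
def LindelofNumberLE (X : Type u) [TopologicalSpace X] (κ : Cardinal.{u}) : Prop :=
  ∀ 𝒰 : Set (Set X), (∀ U ∈ 𝒰, IsOpen U) → ⋃₀ 𝒰 = Set.univ →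
    ∃ 𝒱 ⊆ 𝒰, #𝒱 ≤ κ ∧ ⋃₀ 𝒱 = Set.univ

/-- The weight of X is at most κ: there is a base of size ≤ κ. -/
def WeightLE (X : Type u) [TopologicalSpace X] (κ : Cardinal.{u}) : Prop :=
  ∃ B : Set (Set X), TopologicalSpace.IsTopologicalBasis B ∧ #B ≤ κ

/-- N is a network for X. -/
def IsNetwork (X : Type u) [TopologicalSpace X] (N : Set (Set X)) : Prop :=
  ∀ (x : X) (U : Set X), IsOpen U → x ∈ U → ∃ n ∈ N, x ∈ n ∧ n ⊆ U

/-- X is linearly Lindelöf: regular (incl. T1) and every open cover linearly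
ordered by inclusion has a countable subcover. -/
def LinearlyLindelofSp (X : Type u) [TopologicalSpace X] : Prop :=
  RegularSpace X ∧ T1Space X ∧
    ∀ 𝒰 : Set (Set X), (∀ U ∈ 𝒰, IsOpen U) → IsChain (· ⊆ ·) 𝒰 → ⋃₀ 𝒰 = Set.univ →
      ∃ 𝒱 ⊆ 𝒰, 𝒱.Countable ∧ ⋃₀ 𝒱 = Set.univ

/-- U ⊆ X^ω is a basic open set: a product of open sets, all but finitely many of
which equal X. -/
def IsBasicOpen (X : Type u) [TopologicalSpace X] (U : Set (ℕ → X)) : Prop :=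
  ∃ V : ℕ → Set X, (∀ i, IsOpen (V i)) ∧ {i | V i ≠ Set.univ}.Finite ∧
    U = Set.pi Set.univ V

/-- A family of subsets of Z is point-κ if every point belongs to at most κ members. -/
def PointLE {Z : Type u} (𝒲 : Set (Set Z)) (κ : Cardinal.{u}) : Prop :=
  ∀ z : Z, #({W ∈ 𝒲 | z ∈ W}) ≤ κ

/-- A non-empty space is zero-dimensional if it is T1 and has a base of clopen sets. -/
def ZeroDimensionalSp (Y : Type u) [TopologicalSpace Y] : Prop :=
  Nonempty Y ∧ T1Space Y ∧
    ∃ B : Set (Set Y), TopologicalSpace.IsTopologicalBasis B ∧ ∀ b ∈ B, IsClopen b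

/-!
Cover `X^ω` by at most `𝔠` boxes with cozero sides, each inside a member of the given cover. The
functions defining these boxes factor the cover through a continuous map of `X` onto a subspace `R`
of a cube of weight at most `𝔠`. So `R` is productively Lindelöf, and under CH the cube has at most
`ℵ₁` closed `Gδ` sets.

Such an `R` is an Alster space: otherwise some `ℵ₁` closed `Gδ` sets `G γ`, among which every
compact subset of `R` has a superset, admit no countable subfamily covering `R`. Picking points of
`R` along `ω₁` gives an uncountable `A ⊆ R` meeting every `G γ` in a countable set. Reflection along
`ω₁` produces a Lindelöf set `B` disjoint from `R` on which `A` is concentrated. Isolating the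
points of `A` in `A ∪ B` then gives a Lindelöf space whose product with `R` has an uncountable
closed discrete subset, which is absurd.

Finally, every countable power of an Alster space is Lindelöf. Otherwise, given an open cover
without a countable subcover, choose compact sets `K₀, K₁, …` one coordinate at a time so that no
product of `Gδ` sets around `K₀, …, Kₙ₋₁` is countably covered. This contradicts the tube lemma for
the compact box `K₀ × K₁ × ⋯`.
-/

theorem quasiLindelofSp_iff_lindelofSpace {X : Type u} [TopologicalSpace X] :
    QuasiLindelofSp X ↔ LindelofSpace X := by
  rw [← isLindelof_univ_iff]
  constructor
  · refine fun h => isLindelof_of_countable_subcover fun U hU hcov => ?_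
    obtain ⟨𝒱, h𝒱, h𝒱c, h𝒱cov⟩ := h (range U) (forall_mem_range.2 hU) (univ_subset_iff.1 hcov)
    choose i hi using h𝒱
    have := h𝒱c.to_subtype
    refine ⟨range fun V : 𝒱 => i V.2, countable_range _, ?_⟩
    rw [biUnion_range, ← h𝒱cov, sUnion_eq_iUnion]
    exact iUnion_mono fun V => (hi V.2).ge
  · intro h 𝒰 hU hcov
    obtain ⟨𝒱, h𝒱, hc, hcov'⟩ := h.elim_countable_subcover_image (b := 𝒰) (c := id) hU
      (by simp only [id, ← sUnion_eq_biUnion, hcov, subset_univ])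
    exact ⟨𝒱, h𝒱, hc, univ_subset_iff.1 (sUnion_eq_biUnion ▸ hcov')⟩

theorem ProductivelyLindelofSp.engLindelofSp {X : Type u} [TopologicalSpace X]
    (hX : ProductivelyLindelofSp X) : EngLindelofSp X := by
  obtain ⟨hreg, hT1, hlind⟩ := hX PUnit.{u + 1}
    ⟨inferInstance, inferInstance, quasiLindelofSp_iff_lindelofSpace.2 inferInstance⟩
  rw [quasiLindelofSp_iff_lindelofSpace] at hlind
  have e : X ≃ₜ X × PUnit.{u + 1} := (Homeomorph.prodPUnit X).symm
  exact ⟨e.isInducing.regularSpace, e.isEmbedding.t1Space, quasiLindelofSp_iff_lindelofSpace.2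
    (LindelofSpace.of_continuous_surjective e.symm.continuous e.symm.surjective)⟩

theorem ProductivelyLindelofSp.of_continuous_surjective {X Y : Type u} [TopologicalSpace X]
    [TopologicalSpace Y] [T3Space Y] (hX : ProductivelyLindelofSp X) {f : X → Y}
    (hf : Continuous f) (hsurj : Function.Surjective f) : ProductivelyLindelofSp Y := by
  intro S _ hS
  have := quasiLindelofSp_iff_lindelofSpace.1 (hX S hS).2.2
  obtain ⟨hreg, hT1, -⟩ := hS
  exact ⟨inferInstance, inferInstance, quasiLindelofSp_iff_lindelofSpace.2
    (LindelofSpace.of_continuous_surjective (hf.prodMap continuous_id)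
      (hsurj.prodMap Function.surjective_id))⟩

/-- The Michael-type refinement of a space `Y`: the points of `A` become isolated and the remaining
points keep their neighbourhoods. -/
@[ext]
structure Discretize {Y : Type*} (A : Set Y) where
  val : Y

namespace Discretize

variable {Y : Type*} {A : Set Y}

theorem val_injective : Function.Injective (val : Discretize A → Y) := fun _ _ => Discretize.ext

variable [TopologicalSpace Y]

instance : TopologicalSpace (Discretize A) where
  IsOpen W := ∀ y ∈ W, y.val ∉ A → W ∈ (𝓝 y.val).comap val
  isOpen_univ _ _ _ := Filter.univ_mem
  isOpen_inter _ _ hV hW y hy hyA := Filter.inter_mem (hV y hy.1 hyA) (hW y hy.2 hyA)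
  isOpen_sUnion := by
    rintro 𝒲 h𝒲 y ⟨W, hW, hy⟩ hyA
    exact Filter.mem_of_superset (h𝒲 W hW y hy hyA) (subset_sUnion_of_mem hW)

theorem isOpen_iff {W : Set (Discretize A)} :
    IsOpen W ↔ ∀ y ∈ W, y.val ∉ A → W ∈ (𝓝 y.val).comap val := Iff.rfl

theorem continuous_val : Continuous (val : Discretize A → Y) :=
  continuous_def.2 fun _ hU _ hy _ => Filter.preimage_mem_comap (hU.mem_nhds hy)

theorem isOpen_of_forall_val_mem {W : Set (Discretize A)} (hW : ∀ y ∈ W, y.val ∈ A) : IsOpen W :=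
  isOpen_iff.2 fun y hy hyA => absurd (hW y hy) hyA

instance [T2Space Y] : T2Space (Discretize A) :=
  T2Space.of_injective_continuous val_injective continuous_val

instance [T3Space Y] : RegularSpace (Discretize A) := by
  refine RegularSpace.of_exists_mem_nhds_isClosed_subset fun y s hs => ?_
  obtain ⟨W, hWs, hW, hyW⟩ := mem_nhds_iff.1 hs
  by_cases hy : y.val ∈ A
  · have hopen : IsOpen {y} :=
      isOpen_of_forall_val_mem (by simpa only [mem_singleton_iff, forall_eq])
    exact ⟨{y}, hopen.mem_nhds rfl, isClosed_singleton, singleton_subset_iff.2 (hWs hyW)⟩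
  · obtain ⟨U, hU, hUW⟩ := isOpen_iff.1 hW y hyW hy
    obtain ⟨t, ht, htc, htU⟩ := exists_mem_nhds_isClosed_subset hU
    exact ⟨val ⁻¹' t, continuous_val.continuousAt.preimage_mem_nhds ht,
      htc.preimage continuous_val, (preimage_mono htU).trans (hUW.trans hWs)⟩

theorem isDiscrete_preimage_val : IsDiscrete (val ⁻¹' A : Set (Discretize A)) :=
  isDiscrete_iff_forall_subset_exists_isOpen.2 fun s hs =>
    ⟨s, isOpen_of_forall_val_mem hs, inter_eq_left.2 hs⟩

theorem lindelofSpace (hA : IsLindelof Aᶜ) (hcount : ∀ O, IsOpen O → Aᶜ ⊆ O → Oᶜ.Countable) :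
    LindelofSpace (Discretize A) := by
  refine isLindelof_univ_iff.1 (isLindelof_of_countable_subcover fun U hU hcov => ?_)
  choose i hi using fun y : Y => mem_iUnion.1 (@hcov ⟨y⟩ trivial)
  have hnhds : ∀ y ∈ Aᶜ, ∃ V ∈ 𝓝 y, (val ⁻¹' V : Set (Discretize A)) ⊆ U (i y) :=
    fun y hy => isOpen_iff.1 (hU (i y)) ⟨y⟩ (hi y) hy
  choose! V hV hVi using hnhds
  obtain ⟨c, hc, hcA, hcov'⟩ := hA.elim_nhds_subcover (fun y => interior (V y))
    fun y hy => interior_mem_nhds.2 (hV y hy)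
  set O := ⋃ y ∈ c, interior (V y)
  have hO : Oᶜ.Countable := hcount O (isOpen_biUnion fun _ _ => isOpen_interior) hcov'
  refine ⟨i '' (c ∪ Oᶜ), (hc.union hO).image i, fun y _ => ?_⟩
  rw [biUnion_image]
  by_cases hy : y.val ∈ O
  · obtain ⟨z, hz, hyz⟩ := mem_iUnion₂.1 hy
    exact mem_iUnion₂.2 ⟨z, Or.inl hz, hVi z (hcA z hz) (interior_subset (s := V z) hyz)⟩
  · exact mem_iUnion₂.2 ⟨y.val, Or.inr hy, hi y.val⟩

theorem lindelofSpace_union {A B : Set Y} (hd : Disjoint A B) (hB : IsLindelof B)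
    (hAB : ∀ O, IsOpen O → B ⊆ O → (A \ O).Countable) :
    LindelofSpace (Discretize (Subtype.val ⁻¹' A : Set ↥(A ∪ B))) := by
  have hcompl : (Subtype.val ⁻¹' A : Set ↥(A ∪ B))ᶜ = Subtype.val ⁻¹' B := by
    ext ⟨z, hz⟩
    exact ⟨hz.resolve_left, fun hzB hzA => hd.notMem_of_mem_left hzA hzB⟩
  refine lindelofSpace ?_ fun O hO hBO => ?_
  · rwa [hcompl, IsEmbedding.subtypeVal.isLindelof_iff, Subtype.image_preimage_coe,
      inter_eq_right.2 subset_union_right]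
  · obtain ⟨W, hW, rfl⟩ := isOpen_induced_iff.1 hO
    rw [hcompl] at hBO
    have hBW : B ⊆ W := fun z hz => @hBO ⟨z, Or.inr hz⟩ hz
    refine ((hAB W hW hBW).preimage Subtype.val_injective).mono fun y hy => ?_
    exact ⟨y.2.resolve_right fun hyB => hy (hBW hyB), hy⟩

end Discretize

theorem ProductivelyLindelofSp.countable_of_concentrated {Z : Type u} [TopologicalSpace Z]
    [T3Space Z] {R A B : Set Z} (hR : ProductivelyLindelofSp R) (hAR : A ⊆ R) (hRB : Disjoint R B)
    (hB : IsLindelof B) (hAB : ∀ O, IsOpen O → B ⊆ O → (A \ O).Countable) : A.Countable := by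
  let Y := Discretize (Subtype.val ⁻¹' A : Set ↥(A ∪ B))
  let A' : Set Y := Discretize.val ⁻¹' (Subtype.val ⁻¹' A)
  have hY : LindelofSpace Y := Discretize.lindelofSpace_union (hRB.mono_left hAR) hB hAB
  have hprod : LindelofSpace (R × Y) := quasiLindelofSp_iff_lindelofSpace.1
    (hR Y ⟨inferInstance, inferInstance, quasiLindelofSp_iff_lindelofSpace.2 hY⟩).2.2
  let Δ : Set (R × Y) := {p | (p.1 : Z) = p.2.val}
  have hΔ : IsClosed Δ := isClosed_eq (by fun_prop)
    (continuous_subtype_val.comp (Discretize.continuous_val.comp continuous_snd))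
  have hsnd : Prod.snd '' Δ = A' := by
    ext y
    constructor
    · rintro ⟨⟨r, y⟩, hry : (r : Z) = y.val, rfl⟩
      exact y.val.2.resolve_right (hRB.notMem_of_mem_left (hry ▸ r.2))
    · exact fun hy => ⟨(⟨y.val, hAR hy⟩, y), rfl, rfl⟩
  have hA'lind : IsLindelof A' := hsnd ▸ hΔ.isLindelof.image continuous_snd
  have hA' : A'.Countable := hA'lind.countable_of_isDiscrete Discretize.isDiscrete_preimage_val
  refine (hA'.image fun y => (y.val : Z)).mono fun z hz => ?_
  exact ⟨⟨⟨z, Or.inl hz⟩⟩, hz, rfl⟩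

section CountableInitialSegments

variable {Ω : Type*} [LinearOrder Ω] [∀ a : Ω, Countable (Iio a)]

theorem countable_Iic_of_countable_Iio (a : Ω) : (Iic a).Countable := by
  rw [← Iio_insert]
  exact (to_countable (Iio a)).insert a

theorem exists_forall_lt_of_countable [Uncountable Ω] {c : Set Ω} (hc : c.Countable) :
    ∃ b, ∀ a ∈ c, a < b := by
  by_contra! hcon
  refine not_countable_univ ((hc.biUnion fun a _ => countable_Iic_of_countable_Iio a).mono ?_)
  exact fun b _ => by simpa only [mem_iUnion₂, mem_Iic, exists_prop] using hcon b

end CountableInitialSegments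

instance countable_Iio_toType_ord_aleph_one (a : (Cardinal.aleph.{u} 1).ord.ToType) :
    Countable (Iio a) := by
  rw [← Cardinal.mk_le_aleph0_iff, ← Cardinal.lt_aleph_one_iff]
  simpa only [Cardinal.mk_ord_toType] using Cardinal.mk_Iio_lt a (by simp)

instance uncountable_toType_ord_aleph_one : Uncountable (Cardinal.aleph.{u} 1).ord.ToType := by
  rw [← Cardinal.aleph0_lt_mk_iff, Cardinal.mk_ord_toType]
  exact Cardinal.aleph0_lt_aleph_one

theorem exists_surjective_toType_ord_aleph_one {ι : Type u} [Nonempty ι]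
    (hι : #ι ≤ Cardinal.aleph 1) :
    ∃ e : (Cardinal.aleph.{u} 1).ord.ToType → ι, Function.Surjective e := by
  rw [← Cardinal.mk_ord_toType (Cardinal.aleph 1)] at hι
  obtain ⟨e⟩ := hι
  exact ⟨_, Function.invFun_surjective e.injective⟩

/-- The set `S` is covered by countably many members of the family `W`. -/
def IsCountablyCovered {ι α : Type*} (W : ι → Set α) (S : Set α) : Prop :=
  ∃ c : Set ι, c.Countable ∧ S ⊆ ⋃ i ∈ c, W i

namespace IsCountablyCovered

variable {ι α : Type*} {W : ι → Set α} {S T : Set α}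

theorem mono (hT : IsCountablyCovered W T) (h : S ⊆ T) : IsCountablyCovered W S :=
  let ⟨c, hc, hTc⟩ := hT
  ⟨c, hc, h.trans hTc⟩

theorem of_subset {i : ι} (h : S ⊆ W i) : IsCountablyCovered W S :=
  ⟨{i}, countable_singleton i, by rwa [biUnion_singleton]⟩

theorem biUnion {κ : Type*} {c : Set κ} (hc : c.Countable) {E : κ → Set α}
    (hE : ∀ k ∈ c, IsCountablyCovered W (E k)) : IsCountablyCovered W (⋃ k ∈ c, E k) := by
  choose! d hd hEd using hE
  refine ⟨⋃ k ∈ c, d k, hc.biUnion hd, iUnion₂_subset fun k hk => (hEd k hk).trans ?_⟩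
  exact biUnion_subset_biUnion_left (subset_biUnion_of_mem hk)

theorem sUnion {𝒮 : Set (Set α)} (h𝒮 : 𝒮.Countable) (h : ∀ S ∈ 𝒮, IsCountablyCovered W S) :
    IsCountablyCovered W (⋃₀ 𝒮) := by
  rw [sUnion_eq_biUnion]
  exact biUnion h𝒮 h

theorem union (hS : IsCountablyCovered W S) (hT : IsCountablyCovered W T) :
    IsCountablyCovered W (S ∪ T) := by
  rw [← sUnion_pair]
  exact sUnion (to_countable _) (by rintro _ (rfl | rfl) <;> assumption)

end IsCountablyCovered

/-- The construction of a Luzin set: pick a point of `P` outside the first `β` members of the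
family, for every `β < ω₁`. -/
theorem exists_uncountable_forall_countable_inter {ι : Type u} (hι : #ι ≤ Cardinal.aleph 1)
    {α : Type*} {W : ι → Set α} {P : Set α} (hcov : P ⊆ ⋃ i, W i)
    (hP : ¬ IsCountablyCovered W P) :
    ∃ A ⊆ P, ¬ A.Countable ∧ ∀ i, (A ∩ W i).Countable := by
  have hne : Nonempty ι := by
    by_contra! hemp
    exact hP ⟨∅, countable_empty, by simpa only [iUnion_of_empty] using hcov⟩
  obtain ⟨e, he⟩ := exists_surjective_toType_ord_aleph_one hι
  have hpick : ∀ β, ∃ a ∈ P, ∀ γ < β, a ∉ W (e γ) := by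
    intro β
    by_contra! hcon
    refine hP ⟨e '' Iio β, (to_countable _).image e, fun a ha => ?_⟩
    rw [biUnion_image]
    simpa only [mem_iUnion₂, mem_Iio, exists_prop] using hcon a ha
  choose a haP haW using hpick
  refine ⟨range a, range_subset_iff.2 haP, fun hcount => ?_, he.forall.2 fun γ => ?_⟩
  · have hindex : ∀ z ∈ range a, ∃ γ, z ∈ W (e γ) :=
      forall_mem_range.2 fun β => he.exists.1 (mem_iUnion.1 (hcov (haP β)))
    choose! g hg using hindex
    obtain ⟨β, hβ⟩ := exists_forall_lt_of_countable (hcount.image g)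
    exact haW β _ (hβ _ (mem_image_of_mem g (mem_range_self β))) (hg _ (mem_range_self β))
  · refine ((countable_Iic_of_countable_Iio γ).image a).mono ?_
    rintro _ ⟨⟨β, rfl⟩, hβ⟩
    exact ⟨β, not_lt.1 fun hγ => haW β γ hγ hβ, rfl⟩

theorem isLindelof_preimage_of_isProperMap {X Y : Type*} [TopologicalSpace X] [TopologicalSpace Y]
    {f : X → Y} (hf : IsProperMap f) {S : Set Y} (hS : IsLindelof S) : IsLindelof (f ⁻¹' S) := by
  intro F _ _ hF
  obtain ⟨y, hyS, hy⟩ := hS (f := F.map f) (Filter.map_le_iff_le_comap.2 (by simpa using hF))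
  obtain ⟨x, rfl, hx⟩ := hf.clusterPt_of_mapClusterPt hy
  exact ⟨x, hyS, hx⟩

/-- Closed Gδ sets. In the normal spaces considered here they are the zero sets of continuous real
functions. -/
structure IsClosedGδ {Z : Type*} [TopologicalSpace Z] (E : Set Z) : Prop where
  isClosed : IsClosed E
  isGδ : IsGδ E

namespace IsClosedGδ

variable {Z : Type*} [TopologicalSpace Z] {E : Set Z}

theorem empty : IsClosedGδ (∅ : Set Z) := ⟨isClosed_empty, IsGδ.empty⟩

theorem preimage {Y : Type*} [TopologicalSpace Y] {f : Z → Y} (hf : Continuous f) {E : Set Y}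
    (hE : IsClosedGδ E) : IsClosedGδ (f ⁻¹' E) :=
  ⟨hE.isClosed.preimage hf, hE.isGδ.preimage hf⟩

theorem biInter {ι : Type*} {c : Set ι} (hc : c.Countable) {E : ι → Set Z}
    (hE : ∀ i ∈ c, IsClosedGδ (E i)) : IsClosedGδ (⋂ i ∈ c, E i) :=
  ⟨isClosed_biInter fun i hi => (hE i hi).isClosed, IsGδ.biInter hc fun i hi => (hE i hi).isGδ⟩

theorem exists_eq_preimage_one [CompactSpace Z] [T2Space Z] (hE : IsClosedGδ E) :
    ∃ f : C(Z, ℝ), E = f ⁻¹' {1} :=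
  let ⟨f, hf, _⟩ := exists_continuous_one_zero_of_isCompact_of_isGδ hE.isClosed.isCompact hE.isGδ
    isClosed_empty (disjoint_empty E)
  ⟨f, hf⟩

theorem isLindelof_compl_biUnion [CompactSpace Z] [T2Space Z] {ι : Type*} {c : Set ι}
    (hc : c.Countable) {E : ι → Set Z} (hE : ∀ i ∈ c, IsClosedGδ (E i)) :
    IsLindelof (⋃ i ∈ c, E i)ᶜ := by
  have := hc.to_subtype
  choose f hf using fun i : c => (hE i i.2).exists_eq_preimage_one
  let F : Z → c → ℝ := fun z i => f i z
  have hF : IsProperMap F := (by fun_prop : Continuous F).isProperMap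
  have hcompl : (⋃ i ∈ c, E i)ᶜ = F ⁻¹' {p | ∀ i, p i ≠ 1} := by
    ext z
    simp only [biUnion_eq_iUnion, hf, compl_iUnion, mem_iInter, mem_compl_iff, mem_preimage,
      mem_singleton_iff, mem_ofPred_eq, F, ne_eq]
  rw [hcompl]
  exact isLindelof_preimage_of_isProperMap hF (HereditarilyLindelofSpace.isLindelof _)

theorem exists_superset_disjoint [CompletelyRegularSpace Z] {T S : Set Z} (hT : IsClosed T)
    (hS : IsLindelof S) (hd : Disjoint T S) : ∃ E, IsClosedGδ E ∧ T ⊆ E ∧ Disjoint E S := by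
  have hsep : ∀ s ∈ S, ∃ f : Z → unitInterval, Continuous f ∧ f s = 0 ∧ EqOn f 1 T := fun s hs =>
    CompletelyRegularSpace.completely_regular s T hT (hd.notMem_of_mem_right hs)
  choose! f hf hfs hfT using hsep
  obtain ⟨c, hc, hcS, hcov⟩ := hS.elim_nhds_subcover (fun s => f s ⁻¹' {1}ᶜ) fun s hs =>
    (isOpen_compl_singleton.preimage (hf s hs)).mem_nhds (by simp [hfs s hs])
  refine ⟨⋂ s ∈ c, f s ⁻¹' {1}, biInter hc fun s hs => ?_, subset_iInter₂ fun s hs z hz =>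
    hfT s (hcS s hs) hz, ?_⟩
  · exact preimage (hf s (hcS s hs)) ⟨isClosed_singleton, IsGδ.singleton 1⟩
  · refine disjoint_left.2 fun z hzE hzS => ?_
    obtain ⟨s, hs, hzs⟩ := mem_iUnion₂.1 (hcov hzS)
    exact hzs (mem_iInter₂.1 hzE s hs)

theorem exists_between [CompactSpace Z] [T2Space Z] {K H : Set Z} (hK : IsClosed K) (hH : IsGδ H)
    (hKH : K ⊆ H) : ∃ E, IsClosedGδ E ∧ K ⊆ E ∧ E ⊆ H := by
  obtain ⟨U, hU, rfl⟩ := isGδ_iff_eq_iInter_nat.1 hH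
  have hlind : IsLindelof (⋂ n, U n)ᶜ := by
    rw [compl_iInter]
    exact isLindelof_iUnion fun n => (hU n).isClosed_compl.isLindelof
  obtain ⟨E, hE, hKE, hd⟩ :=
    exists_superset_disjoint hK hlind (disjoint_compl_right_iff_subset.2 hKH)
  exact ⟨E, hE, hKE, disjoint_compl_right_iff_subset.1 hd⟩

end IsClosedGδ

theorem mk_finset_le_of_aleph0_le {α : Type u} {κ : Cardinal.{u}} (hκ : ℵ₀ ≤ κ) (hα : #α ≤ κ) :
    #(Finset α) ≤ κ := by
  classical
  exact (Cardinal.mk_le_of_surjective List.toFinset_surjective).trans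
    ((Cardinal.mk_list_le_max α).trans (max_le hκ hα))

theorem weightLE_of_eq_generateFrom {Z : Type u} [t : TopologicalSpace Z] {κ : Cardinal.{u}}
    (hκ : ℵ₀ ≤ κ) {𝒮 : Set (Set Z)} (ht : t = TopologicalSpace.generateFrom 𝒮) (h𝒮 : #𝒮 ≤ κ) :
    WeightLE Z κ := by
  refine ⟨_, TopologicalSpace.isTopologicalBasis_of_subbasis ht, ?_⟩
  have hrange : (fun f => ⋂₀ f) '' {f : Set (Set Z) | f.Finite ∧ f ⊆ 𝒮} ⊆
      range fun f : Finset 𝒮 => ⋂₀ (Subtype.val '' (f : Set 𝒮)) := by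
    rintro _ ⟨f, ⟨hf, hf𝒮⟩, rfl⟩
    refine ⟨(hf.preimage Subtype.val_injective.injOn).toFinset, ?_⟩
    simp only [Finite.coe_toFinset, Subtype.image_preimage_coe, inter_eq_right.2 hf𝒮]
  exact (Cardinal.mk_le_mk_of_subset hrange).trans
    (Cardinal.mk_range_le.trans (mk_finset_le_of_aleph0_le hκ h𝒮))

theorem weightLE_pi_of_secondCountable {ι : Type u} {X : Type} [TopologicalSpace X]
    [SecondCountableTopology X] {κ : Cardinal.{u}} (hκ : ℵ₀ ≤ κ) (hι : #ι ≤ κ) :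
    WeightLE (ι → X) κ := by
  let 𝓑 := TopologicalSpace.countableBasis X
  have hsubbasis : Pi.topologicalSpace = TopologicalSpace.generateFrom
      (⋃ i : ι, preimage (Function.eval i) '' 𝓑) := by
    simp only [generateFrom_iUnion, ← induced_generateFrom_eq]
    rw [← (TopologicalSpace.isBasis_countableBasis X).eq_generateFrom]
    rfl
  refine weightLE_of_eq_generateFrom hκ hsubbasis ?_
  have hcount : ∀ i : ι, #(preimage (Function.eval i) '' 𝓑 : Set (Set (ι → X))) ≤ ℵ₀ := fun i =>
    Cardinal.le_aleph0_iff_set_countable.2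
      ((TopologicalSpace.countable_countableBasis X).image _)
  exact (Cardinal.mk_iUnion_le _).trans
    (Cardinal.mul_le_of_le hκ hι ((ciSup_le' hcount).trans hκ))

theorem mk_isClosedGδ_le {Z : Type u} [TopologicalSpace Z] [CompactSpace Z]
    (hZ : WeightLE Z Cardinal.continuum) : #{E : Set Z // IsClosedGδ E} ≤ Cardinal.continuum := by
  obtain ⟨𝓑, h𝓑, hcard⟩ := hZ
  let Φ : (ℕ → Finset 𝓑) → Set Z := fun t => ⋂ n, ⋃ B ∈ t n, (B : Set Z)
  have hΦ : {E : Set Z | IsClosedGδ E} ⊆ range Φ := by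
    intro E hE
    obtain ⟨U, hU, rfl⟩ := isGδ_iff_eq_iInter_nat.1 hE.isGδ
    have happrox : ∀ n, ∃ t : Finset 𝓑, ⋂ m, U m ⊆ ⋃ B ∈ t, (B : Set Z) ∧
        ⋃ B ∈ t, (B : Set Z) ⊆ U n := by
      intro n
      obtain ⟨t, htU, htf, ht⟩ := hE.isClosed.isCompact.elim_finite_subcover_image
        (b := {B : 𝓑 | (B : Set Z) ⊆ U n}) (c := Subtype.val) (fun B _ => h𝓑.isOpen B.2)
        fun z hz => by
          obtain ⟨B, hB, hzB, hBU⟩ := h𝓑.exists_subset_of_mem_open (mem_iInter.1 hz n) (hU n)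
          exact mem_iUnion₂.2 ⟨⟨B, hB⟩, hBU, hzB⟩
      refine ⟨htf.toFinset, ?_, ?_⟩ <;> simp only [Finite.mem_toFinset]
      exacts [ht, iUnion₂_subset fun B hB => htU hB]
    choose t ht htU using happrox
    exact ⟨t, (iInter_mono htU).antisymm (subset_iInter ht)⟩
  calc #{E : Set Z // IsClosedGδ E} ≤ #(range Φ) := Cardinal.mk_le_mk_of_subset hΦ
    _ ≤ #(ℕ → Finset 𝓑) := Cardinal.mk_range_le
    _ = #(Finset 𝓑) ^ (ℵ₀ : Cardinal.{u}) := by simp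
    _ ≤ Cardinal.continuum ^ (ℵ₀ : Cardinal.{u}) := Cardinal.power_le_power_right
      (mk_finset_le_of_aleph0_le Cardinal.aleph0_le_continuum hcard)
    _ = Cardinal.continuum := Cardinal.continuum_power_aleph0

theorem ProductivelyLindelofSp.exists_countable_isClosedGδ_disjoint {Z : Type u}
    [TopologicalSpace Z] [CompactSpace Z] [T2Space Z]
    (hZ : #{E : Set Z // IsClosedGδ E} ≤ Cardinal.aleph 1)
    {R L : Set Z} (hR : ProductivelyLindelofSp R) (hL : IsLindelof L) (hRL : Disjoint R L) :
    ∃ 𝒞 : Set (Set Z), 𝒞.Countable ∧ (∀ C ∈ 𝒞, IsClosedGδ C ∧ Disjoint C L) ∧ R ⊆ ⋃₀ 𝒞 := by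
  let W : {E : Set Z // IsClosedGδ E ∧ Disjoint E L} → Set Z := Subtype.val
  suffices IsCountablyCovered W R by
    obtain ⟨c, hc, hRc⟩ := this
    refine ⟨W '' c, hc.image W, ?_, by rwa [sUnion_image]⟩
    rintro _ ⟨E, -, rfl⟩
    exact E.2
  by_contra hcon
  have hsep : ∀ T, IsClosed T → Disjoint T L → ∃ E, T ⊆ W E := fun T hT hTL =>
    let ⟨E, hE, hTE, hEL⟩ := IsClosedGδ.exists_superset_disjoint hT hL hTL
    ⟨⟨E, hE, hEL⟩, hTE⟩
  have hcov : R ⊆ ⋃ E, W E := fun z hz =>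
    let ⟨E, hE⟩ := hsep {z} isClosed_singleton
      (disjoint_singleton_left.2 (hRL.notMem_of_mem_left hz))
    mem_iUnion.2 ⟨E, hE rfl⟩
  obtain ⟨A, hAR, hA, hAW⟩ := exists_uncountable_forall_countable_inter
    ((Cardinal.mk_subtype_mono fun _ hE => hE.1).trans hZ) hcov hcon
  refine hA (hR.countable_of_concentrated hAR hRL hL fun O hO hLO => ?_)
  obtain ⟨E, hE⟩ := hsep Oᶜ hO.isClosed_compl (disjoint_compl_left_iff_subset.2 hLO)
  exact (hAW E).mono (inter_subset_inter_right A hE)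

theorem exists_isClosed_subset_forall_not_isCountablyCovered {Z : Type*} [TopologicalSpace Z]
    [CompactSpace Z] [T2Space Z] {ι : Type*} {G : ι → Set Z} (hG : ∀ i, IsClosedGδ (G i))
    {K : Set Z} (hK : IsClosed K) (hKG : ¬ IsCountablyCovered G K) :
    ∃ K' ⊆ K, IsClosed K' ∧ K'.Nonempty ∧
      ∀ O, IsOpen O → (O ∩ K').Nonempty → ¬ IsCountablyCovered G (O ∩ K') := by
  let U := ⋃₀ {O | IsOpen O ∧ IsCountablyCovered G (O ∩ K)}
  have hU : IsOpen U := isOpen_sUnion fun O hO => hO.1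
  have hlocal : ∀ T, IsLindelof T → T ⊆ K → T ⊆ U → IsCountablyCovered G T :=
    fun T hT hTK hTU => hT.induction_on (fun s t hst ht => ht.mono hst)
      (fun _ => IsCountablyCovered.sUnion) fun z hz =>
        let ⟨O, ⟨hO, hOK⟩, hzO⟩ := hTU hz
        ⟨O ∩ T, Filter.inter_mem (mem_nhdsWithin_of_mem_nhds (hO.mem_nhds hzO))
          self_mem_nhdsWithin, hOK.mono (inter_subset_inter_right O hTK)⟩
  refine ⟨K \ U, sdiff_subset, hK.sdiff hU,
    sdiff_nonempty.2 fun hKU => hKG (hlocal K hK.isLindelof Subset.rfl hKU), ?_⟩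
  rintro O hO ⟨z, hzO, -, hzU⟩ ⟨c, hc, hcov⟩
  obtain ⟨N, hN, hNc, hNO⟩ := exists_mem_nhds_isClosed_subset (hO.mem_nhds hzO)
  have hrest : IsCountablyCovered G ((⋃ i ∈ c, G i)ᶜ ∩ (N ∩ K)) := by
    refine hlocal _ ?_ (inter_subset_right.trans inter_subset_right) ?_
    · exact (IsClosedGδ.isLindelof_compl_biUnion hc fun i _ => hG i).inter_right (hNc.inter hK)
    · exact fun w hw => by_contra fun hwU => hw.1 (hcov ⟨hNO hw.2.1, hw.2.2, hwU⟩)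
  have hNK : IsCountablyCovered G (N ∩ K) := by
    refine (IsCountablyCovered.union ⟨c, hc, Subset.rfl⟩ hrest).mono fun w hw => ?_
    exact (em (w ∈ ⋃ i ∈ c, G i)).imp_right fun h => ⟨h, hw⟩
  exact hzU ⟨interior N, ⟨isOpen_interior, hNK.mono (inter_subset_inter_left K interior_subset)⟩,
    mem_interior_iff_mem_nhds.2 hN⟩

theorem exists_isOpen_inter_subset_of_isCompact_subset_biUnion {Y : Type*} [TopologicalSpace Y]
    [T2Space Y] {S : Set Y} (hS : IsCompact S) (hne : S.Nonempty) {ι : Type*} {c : Set ι}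
    (hc : c.Countable) {D : ι → Set Y} (hD : ∀ i ∈ c, IsClosed (D i)) (hSD : S ⊆ ⋃ i ∈ c, D i) :
    ∃ i ∈ c, ∃ W, IsOpen W ∧ (W ∩ S).Nonempty ∧ W ∩ S ⊆ D i := by
  have := isCompact_iff_compactSpace.1 hS
  have := hne.to_subtype
  have := hc.to_subtype
  obtain ⟨i, y, hy⟩ := nonempty_interior_of_iUnion_of_closed
    (f := fun i : c => (Subtype.val ⁻¹' D i : Set S))
    (fun i => (hD i i.2).preimage continuous_subtype_val)
    (by rwa [← preimage_iUnion, preimage_eq_univ_iff, Subtype.range_coe,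
      ← biUnion_eq_iUnion c fun i _ => D i])
  obtain ⟨W, hW, hWi⟩ := isOpen_induced_iff.1 (isOpen_interior (s := Subtype.val ⁻¹' D i))
  rw [← hWi] at hy
  refine ⟨i, i.2, W, hW, ⟨y, hy, y.2⟩, fun z hz => ?_⟩
  have hzi : (⟨z, hz.2⟩ : S) ∈ Subtype.val ⁻¹' W := hz.1
  rw [hWi] at hzi
  exact interior_subset (s := Subtype.val ⁻¹' D i) hzi

theorem subset_closure_iUnion_inter_of_forall_not_isCountablyCovered {Z : Type*}
    [TopologicalSpace Z] [RegularSpace Z] {ι κ : Type*} {G : ι → Set Z} {L : κ → Set Z}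
    (hLG : ∀ K, IsClosed K → (∀ ξ, Disjoint K (L ξ)) → ∃ γ, K ⊆ G γ) {K : Set Z} (hK : IsClosed K)
    (hKG : ∀ O, IsOpen O → (O ∩ K).Nonempty → ¬ IsCountablyCovered G (O ∩ K)) :
    K ⊆ closure (⋃ ξ, K ∩ L ξ) := by
  refine fun z hz => by_contra fun hcl => ?_
  obtain ⟨N, hN, hNc, hNcl⟩ := exists_mem_nhds_isClosed_subset
    (isClosed_closure.isOpen_compl.mem_nhds hcl)
  obtain ⟨γ, hγ⟩ := hLG (N ∩ K) (hNc.inter hK) fun ξ => disjoint_left.2 fun w hw hwL =>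
    hNcl hw.1 (subset_closure (mem_iUnion_of_mem ξ ⟨hw.2, hwL⟩))
  exact hKG (interior N) isOpen_interior ⟨z, mem_interior_iff_mem_nhds.2 hN, hz⟩
    (.of_subset ((inter_subset_inter_left K interior_subset).trans hγ))

section Reflection

variable {Ω : Type*} [LinearOrder Ω] [∀ a : Ω, Countable (Iio a)] [Uncountable Ω] [WellFoundedLT Ω]

theorem exists_forall_finset_Iio_exists_lt (f : Ω → Ω) :
    ∃ α, ∀ s : Finset (Iio α), ∃ a : Ω, (∀ i ∈ s, i.1 < a) ∧ f a < α := by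
  choose g hg using fun a => exists_forall_lt_of_countable (to_countable {a, f a})
  let a : ℕ → Ω := fun n => g^[n] (Classical.arbitrary Ω)
  have ha_succ : ∀ n, a (n + 1) = g (a n) := fun n => Function.iterate_succ_apply' g n _
  have ha_lt : ∀ n, a n < a (n + 1) := fun n => ha_succ n ▸ hg (a n) (a n) (by simp)
  have ha : Monotone a := (strictMono_nat_of_lt_succ ha_lt).monotone
  obtain ⟨b, hb⟩ := exists_forall_lt_of_countable (countable_range a)
  obtain ⟨α, hα, hmin⟩ := wellFounded_lt.has_min {b | ∀ n, a n < b} ⟨b, forall_mem_range.1 hb⟩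
  refine ⟨α, fun s => ?_⟩
  have hbelow : ∀ i : Iio α, ∃ n, (i : Ω) ≤ a n := fun i => by
    by_contra! hcon
    exact hmin i hcon i.2
  choose n hn using hbelow
  refine ⟨a (s.sup n + 1), fun i hi => ?_, ?_⟩
  · calc (i : Ω) ≤ a (n i) := hn i
      _ ≤ a (s.sup n) := ha (Finset.le_sup hi)
      _ < a (s.sup n + 1) := ha_lt _
  · calc f (a (s.sup n + 1)) < g (a (s.sup n + 1)) := hg _ _ (by simp)
      _ = a (s.sup n + 2) := (ha_succ _).symm
      _ < α := hα _

theorem exists_image_subset_closure_image {Z M : Type*} [TopologicalSpace Z] [TopologicalSpace M]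
    [SecondCountableTopology M] {h : Ω → Z → M} (hh : ∀ ξ, Continuous (h ξ)) {P : Ω → Set Z}
    {S : Set Z} (hS : S ⊆ closure (⋃ ξ, P ξ)) :
    ∃ α, (fun z (γ : Iio α) => h γ z) '' S ⊆
      closure ((fun z (γ : Iio α) => h γ z) '' ⋃ ξ ∈ Iio α, P ξ) := by
  let F (α : Ω) (z : Z) (γ : Iio α) : M := h γ z
  have hF : ∀ α, Continuous (F α) := fun α => continuous_pi fun γ => hh γ
  have hstage : ∀ α, ∃ β, F α '' S ⊆ closure (F α '' ⋃ ξ ∈ Iio β, P ξ) := by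
    intro α
    let 𝓑 := TopologicalSpace.countableBasis (Iio α → M)
    have hmeet : ∀ b ∈ 𝓑, (b ∩ F α '' ⋃ ξ, P ξ).Nonempty → ∃ ξ, (b ∩ F α '' P ξ).Nonempty :=
      fun b _ => by simp only [image_iUnion, inter_iUnion, nonempty_iUnion, imp_self]
    choose! ξ hξ using hmeet
    obtain ⟨β, hβ⟩ := exists_forall_lt_of_countable
      ((TopologicalSpace.countable_countableBasis _).image ξ)
    have hdense : F α '' S ⊆ closure (F α '' ⋃ ξ, P ξ) :=
      (image_mono hS).trans (image_closure_subset_closure_image (hF α))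
    have hbasis := TopologicalSpace.isBasis_countableBasis (Iio α → M)
    refine ⟨β, fun y hy => hbasis.mem_closure_iff.2 fun b hb hyb => ?_⟩
    refine (hξ b hb (hbasis.mem_closure_iff.1 (hdense hy) b hb hyb)).mono
      (inter_subset_inter_right b (image_mono ?_))
    exact subset_biUnion_of_mem (u := P) (hβ _ (mem_image_of_mem ξ hb))
  choose f hf using hstage
  obtain ⟨α, hα⟩ := exists_forall_finset_Iio_exists_lt f
  refine ⟨α, image_subset_iff.2 fun z hz => mem_closure_iff.2 fun O hO hzO => ?_⟩
  obtain ⟨I, u, hu, huO⟩ := isOpen_pi_iff.1 hO _ hzO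
  obtain ⟨a, hIa, hfa⟩ := hα I
  let V : Set (Iio a → M) := ⋂ i : I, {p | p ⟨i, hIa i i.2⟩ ∈ u i}
  have hV : IsOpen V :=
    isOpen_iInter_of_finite fun i => (hu i i.2).1.preimage (continuous_apply _)
  have hzV : F a z ∈ V := mem_iInter.2 fun i => (hu i i.2).2
  obtain ⟨_, hwV, w, hw, rfl⟩ :=
    mem_closure_iff.1 (hf a (mem_image_of_mem _ hz)) V hV hzV
  refine ⟨F α w, huO fun i hi => mem_iInter.1 hwV ⟨i, hi⟩, w, ?_, rfl⟩
  exact biUnion_subset_biUnion_left (Iio_subset_Iio hfa.le) hw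

/-- If `K` were not countably covered, then `K' ∩ ⋃ ξ, L ξ` would be dense in the part `K'` of `K`
that is nowhere countably covered. By reflection this is already visible in the metrizable quotient
of `K'` determined by some `α < ω₁`, where the Baire category theorem contradicts the covering at
`α`. -/
theorem isCountablyCovered_of_forall_subset_sUnion_union {Z : Type*} [TopologicalSpace Z]
    [CompactSpace Z] [T2Space Z] {G L : Ω → Set Z} (hG : ∀ γ, IsClosedGδ (G γ))
    (hL : ∀ ξ, IsClosedGδ (L ξ)) (hLG : ∀ K, IsClosed K → (∀ ξ, Disjoint K (L ξ)) → ∃ γ, K ⊆ G γ)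
    {𝒞 : Ω → Set (Set Z)} (h𝒞c : ∀ α, (𝒞 α).Countable)
    (h𝒞 : ∀ α, ∀ C ∈ 𝒞 α, IsClosed C ∧ ∀ ξ < α, Disjoint C (L ξ))
    {K : Set Z} (hK : IsClosed K) (hK𝒞 : ∀ α, K ⊆ ⋃₀ 𝒞 α ∪ ⋃ γ ∈ Iio α, G γ) :
    IsCountablyCovered G K := by
  by_contra hKG
  obtain ⟨K', hK'K, hK'c, hK'ne, hK'⟩ :=
    exists_isClosed_subset_forall_not_isCountablyCovered hG hK hKG
  choose g hg using fun γ => (hG γ).exists_eq_preimage_one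
  choose l hl using fun ξ => (hL ξ).exists_eq_preimage_one
  obtain ⟨α, hα⟩ := exists_image_subset_closure_image (h := fun ξ z => (l ξ z, g ξ z))
    (by fun_prop) (subset_closure_iUnion_inter_of_forall_not_isCountablyCovered hLG hK'c hK')
  set F : Z → Iio α → ℝ × ℝ := fun z γ => (l γ z, g γ z)
  have hF : Continuous F := by fun_prop
  have hFL : ∀ ξ < α, ∀ z w, F z = F w → z ∈ L ξ → w ∈ L ξ := fun ξ hξ z w hzw hz => by
    rw [hl] at hz ⊢
    exact (congrArg Prod.fst (congrFun hzw ⟨ξ, hξ⟩)).symm.trans hz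
  have hFG : ∀ γ < α, ∀ z w, F z = F w → z ∈ G γ → w ∈ G γ := fun γ hγ z w hzw hz => by
    rw [hg] at hz ⊢
    exact (congrArg Prod.snd (congrFun hzw ⟨γ, hγ⟩)).symm.trans hz
  have hDclosed : ∀ D ∈ 𝒞 α ∪ G '' Iio α, IsClosed (F '' D) := fun D hD =>
    hF.isClosedMap D (hD.elim (fun hD => (h𝒞 α D hD).1) (by rintro ⟨γ, -, rfl⟩; exact (hG γ).1))
  have hDcov : F '' K' ⊆ ⋃ D ∈ 𝒞 α ∪ G '' Iio α, F '' D := by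
    rw [← image_iUnion₂, biUnion_union, biUnion_image, ← sUnion_eq_biUnion]
    exact image_mono (hK'K.trans (hK𝒞 α))
  obtain ⟨D, hD, W, hW, ⟨_, hzW, z, hz, rfl⟩, hWD⟩ :=
    exists_isOpen_inter_subset_of_isCompact_subset_biUnion (hK'c.isCompact.image hF)
      (hK'ne.image F) (c := 𝒞 α ∪ G '' Iio α) (D := image F)
      ((h𝒞c α).union ((to_countable _).image G)) hDclosed hDcov
  rcases hD with hD | ⟨γ, hγ, rfl⟩
  · obtain ⟨_, hwW, w, hw, rfl⟩ := mem_closure_iff.1 (hα (mem_image_of_mem F hz)) W hW hzW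
    obtain ⟨ξ, hξ, hwK, hwL⟩ := mem_iUnion₂.1 hw
    obtain ⟨x, hxD, hxw⟩ := hWD ⟨hwW, mem_image_of_mem F hwK⟩
    exact ((h𝒞 α D hD).2 ξ hξ).notMem_of_mem_left hxD (hFL ξ hξ w x hxw.symm hwL)
  · refine hK' (F ⁻¹' W) (hW.preimage hF) ⟨z, hzW, hz⟩ (.of_subset (i := γ) fun w hw => ?_)
    obtain ⟨x, hxG, hxw⟩ := hWD ⟨hw.1, mem_image_of_mem F hw.2⟩
    exact hFG γ hγ x w hxw hxG

end Reflection

theorem isLindelof_iUnion_of_forall_isCountablyCovered {Ω : Type*} [LinearOrder Ω]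
    [∀ a : Ω, Countable (Iio a)] [Uncountable Ω] {Z : Type*} [TopologicalSpace Z] [CompactSpace Z]
    [T2Space Z] {G B : Ω → Set Z} (hG : ∀ γ, IsClosedGδ (G γ)) (hB : ∀ α, IsLindelof (B α))
    (hBG : ∀ α, Disjoint (B α) (⋃ γ ∈ Iio α, G γ))
    (hclosed : ∀ K, IsClosed K → Disjoint K (⋃ α, B α) → IsCountablyCovered G K) :
    IsLindelof (⋃ α, B α) := by
  refine isLindelof_of_countable_subcover fun U hU hBU => ?_
  obtain ⟨c, hc, hcov⟩ := hclosed (⋃ i, U i)ᶜ (isOpen_iUnion hU).isClosed_compl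
    (disjoint_compl_left_iff_subset.2 hBU)
  obtain ⟨β, hβ⟩ := exists_forall_lt_of_countable hc
  let T := (⋃ γ ∈ Iio β, G γ)ᶜ ∪ ⋃ α ∈ Iio β, B α
  have hT : IsLindelof T :=
    (IsClosedGδ.isLindelof_compl_biUnion (to_countable _) fun γ _ => hG γ).union
      ((to_countable _).isLindelof_biUnion fun α _ => hB α)
  have hTU : T ⊆ ⋃ i, U i := union_subset
    (compl_subset_comm.1 (hcov.trans (biUnion_subset_biUnion_left hβ)))
    ((iUnion₂_subset_iUnion _ _).trans hBU)
  have hBT : ⋃ α, B α ⊆ T := iUnion_subset fun α => by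
    rcases lt_or_ge α β with hα | hα
    · exact subset_union_of_subset_right (subset_biUnion_of_mem (s := Iio β) (u := B) hα) _
    · refine subset_union_of_subset_left ((hBG α).subset_compl_right.trans ?_) _
      exact compl_subset_compl.2 (biUnion_subset_biUnion_left (Iio_subset_Iio hα))
  obtain ⟨r, hr, hTr⟩ := hT.elim_countable_subcover U hU hTU
  exact ⟨r, hr, hBT.trans hTr⟩

section ProductivelyLindelofSubspace

variable {Z : Type u} [TopologicalSpace Z] [CompactSpace Z] [T2Space Z] {R : Set Z}

theorem exists_exhausting_isClosedGδ_disjoint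
    (hZ : #{E : Set Z // IsClosedGδ E} ≤ Cardinal.aleph 1) (hR : IsLindelof R) :
    ∃ L : (Cardinal.aleph.{u} 1).ord.ToType → Set Z, (∀ ξ, IsClosedGδ (L ξ) ∧ Disjoint (L ξ) R) ∧
      ∀ K, (∀ ξ, Disjoint K (L ξ)) → K ⊆ R := by
  have : Nonempty {E : Set Z // IsClosedGδ E ∧ Disjoint E R} :=
    ⟨⟨∅, IsClosedGδ.empty, empty_disjoint R⟩⟩
  obtain ⟨e, he⟩ := exists_surjective_toType_ord_aleph_one
    ((Cardinal.mk_subtype_mono fun E (hE : IsClosedGδ E ∧ Disjoint E R) => hE.1).trans hZ)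
  refine ⟨fun ξ => e ξ, fun ξ => (e ξ).2, fun K hK z hz => by_contra fun hzR => ?_⟩
  obtain ⟨E, hE, hzE, hER⟩ :=
    IsClosedGδ.exists_superset_disjoint isClosed_singleton hR (disjoint_singleton_left.2 hzR)
  obtain ⟨ξ, hξ⟩ := he ⟨E, hE, hER⟩
  refine (hK ξ).notMem_of_mem_left hz ?_
  simpa only [hξ] using singleton_subset_iff.1 hzE

theorem ProductivelyLindelofSp.isCountablyCovered_of_forall_isClosed_subset
    (hZ : #{E : Set Z // IsClosedGδ E} ≤ Cardinal.aleph 1) (hR : ProductivelyLindelofSp R)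
    {G : (Cardinal.aleph.{u} 1).ord.ToType → Set Z} (hG : ∀ γ, IsClosedGδ (G γ))
    (hRG : ∀ K, IsClosed K → K ⊆ R → ∃ γ, K ⊆ G γ) : IsCountablyCovered G R := by
  have hRlind : IsLindelof R :=
    isLindelof_iff_lindelofSpace.2 (quasiLindelofSp_iff_lindelofSpace.1 hR.engLindelofSp.2.2)
  obtain ⟨L, hL, hLR⟩ := exists_exhausting_isClosedGδ_disjoint hZ hRlind
  choose 𝒞 h𝒞c h𝒞 hR𝒞 using fun α => hR.exists_countable_isClosedGδ_disjoint hZ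
    (L := ⋃ ξ ∈ Iio α, L ξ)
    ((to_countable _).isLindelof_biUnion fun ξ _ => (hL ξ).1.isClosed.isLindelof)
    (disjoint_iUnion₂_right.2 fun ξ _ => (hL ξ).2.symm)
  let B α := (⋃₀ 𝒞 α ∪ ⋃ γ ∈ Iio α, G γ)ᶜ
  have hclosed : ∀ K, IsClosed K → Disjoint K (⋃ α, B α) → IsCountablyCovered G K := by
    intro K hK hKB
    refine isCountablyCovered_of_forall_subset_sUnion_union hG (fun ξ => (hL ξ).1)
      (fun K hK hKL => hRG K hK (hLR K hKL)) h𝒞c (fun α C hC => ⟨(h𝒞 α C hC).1.1, ?_⟩) hK ?_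
    · exact disjoint_iUnion₂_right.1 (h𝒞 α C hC).2
    · exact fun α => disjoint_compl_right_iff_subset.1 (disjoint_iUnion_right.1 hKB α)
  have hB : ∀ α, IsLindelof (B α) := fun α => by
    have := IsClosedGδ.isLindelof_compl_biUnion (E := id)
      ((h𝒞c α).union ((to_countable (Iio α)).image G)) fun D hD =>
        hD.elim (fun hD => (h𝒞 α D hD).1) (by rintro ⟨γ, -, rfl⟩; exact hG γ)
    simpa only [biUnion_union, biUnion_image, id, ← sUnion_eq_biUnion] using this
  have hBlind : IsLindelof (⋃ α, B α) := isLindelof_iUnion_of_forall_isCountablyCovered hG hB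
    (fun α => disjoint_compl_left.mono_right subset_union_right) hclosed
  have hRB : Disjoint R (⋃ α, B α) := disjoint_iUnion_right.2 fun α =>
    disjoint_compl_right_iff_subset.2 (subset_union_of_subset_left (hR𝒞 α) _)
  by_contra hcon
  have hcov : R ⊆ ⋃ γ, G γ := fun z hz =>
    let ⟨γ, hγ⟩ := hRG {z} isClosed_singleton (singleton_subset_iff.2 hz)
    mem_iUnion.2 ⟨γ, hγ rfl⟩
  obtain ⟨A, hAR, hA, hAG⟩ :=
    exists_uncountable_forall_countable_inter (Cardinal.mk_ord_toType _).le hcov hcon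
  refine hA (hR.countable_of_concentrated hAR hRB hBlind fun O hO hBO => ?_)
  obtain ⟨c, hc, hcov⟩ := hclosed Oᶜ hO.isClosed_compl (disjoint_compl_left_iff_subset.2 hBO)
  refine (hc.biUnion fun γ _ => hAG γ).mono ?_
  rw [← inter_iUnion₂]
  exact inter_subset_inter_right A hcov

end ProductivelyLindelofSubspace

theorem exists_isGδ_preimage_val_eq {Z : Type*} [TopologicalSpace Z] {R : Set Z} {S : Set R}
    (hS : IsGδ S) : ∃ H, IsGδ H ∧ Subtype.val ⁻¹' H = S := by
  obtain ⟨U, hU, rfl⟩ := isGδ_iff_eq_iInter_nat.1 hS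
  choose V hV hVU using fun n => isOpen_induced_iff.1 (hU n)
  exact ⟨⋂ n, V n, IsGδ.iInter_of_isOpen hV, by rw [preimage_iInter, iInter_congr hVU]⟩

/-- Alster spaces: every cover by `Gδ` sets in which each compact set lies in a member has a
countable subcover. The cover is given as a choice of a member for each compact set. -/
def AlsterSpace (X : Type*) [TopologicalSpace X] : Prop :=
  ∀ G : TopologicalSpace.Compacts X → Set X, (∀ K, IsGδ (G K) ∧ ↑K ⊆ G K) →
    IsCountablyCovered G univ

theorem ProductivelyLindelofSp.alsterSpace {Z : Type u} [TopologicalSpace Z] [CompactSpace Z]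
    [T2Space Z] (hZ : #{E : Set Z // IsClosedGδ E} ≤ Cardinal.aleph 1) {R : Set Z}
    (hR : ProductivelyLindelofSp R) : AlsterSpace R := by
  intro G hG
  let 𝒯 := {E : Set Z // IsClosedGδ E ∧ ∃ K, Subtype.val ⁻¹' E ⊆ G K}
  have h𝒯 : ∀ K : Set Z, IsClosed K → K ⊆ R → ∃ E : 𝒯, K ⊆ E := by
    intro K hK hKR
    let K' : TopologicalSpace.Compacts R := ⟨Subtype.val ⁻¹' K,
      (IsEmbedding.subtypeVal.isInducing.isCompact_preimage_iff
        (by rwa [Subtype.range_coe])).2 hK.isCompact⟩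
    obtain ⟨H, hH, hHG⟩ := exists_isGδ_preimage_val_eq (hG K').1
    obtain ⟨E, hE, hKE, hEH⟩ := IsClosedGδ.exists_between hK hH fun z hz => by
      have : (⟨z, hKR hz⟩ : R) ∈ G K' := (hG K').2 hz
      rwa [← hHG] at this
    exact ⟨⟨E, hE, K', hHG ▸ preimage_mono hEH⟩, hKE⟩
  have : Nonempty 𝒯 := (h𝒯 ∅ isClosed_empty (empty_subset R)).nonempty
  obtain ⟨e, he⟩ := exists_surjective_toType_ord_aleph_one
    ((Cardinal.mk_subtype_mono fun E (hE : IsClosedGδ E ∧ _) => hE.1).trans hZ : #𝒯 ≤ _)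
  obtain ⟨c, hc, hRc⟩ := hR.isCountablyCovered_of_forall_isClosed_subset hZ
    (G := fun γ => e γ) (fun γ => (e γ).2.1) fun K hK hKR => he.exists.1 (h𝒯 K hK hKR)
  choose K hK using fun γ => (e γ).2.2
  refine ⟨K '' c, hc.image K, fun z _ => ?_⟩
  obtain ⟨γ, hγ, hzγ⟩ := mem_iUnion₂.1 (hRc z.2)
  exact mem_iUnion₂.2 ⟨K γ, mem_image_of_mem K hγ, hK γ hzγ⟩

theorem exists_mem_ultrafilter_le_nhds_of_le_nhdsSet {X : Type*} [TopologicalSpace X] {K : Set X}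
    (hK : IsCompact K) {𝒰 : Ultrafilter X} (h𝒰 : ↑𝒰 ≤ 𝓝ˢ K) : ∃ x ∈ K, ↑𝒰 ≤ 𝓝 x := by
  by_contra! hcon
  have hdisj : Disjoint (𝓝ˢ K) 𝒰 := hK.disjoint_nhdsSet_left.2 fun x hx =>
    (Ultrafilter.disjoint_iff_not_le.2 (hcon x hx)).symm
  exact 𝒰.neBot.ne (disjoint_self.1 (hdisj.mono_left h𝒰))

/-- Wallace's theorem for infinite products: an ultrafilter converging coordinatewise to the sets
`K i` converges to a point of the box. -/
theorem pi_nhdsSet_le_nhdsSet_univ_pi {ι : Type*} {X : ι → Type*} [∀ i, TopologicalSpace (X i)]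
    {K : ∀ i, Set (X i)} (hK : ∀ i, IsCompact (K i)) :
    Filter.pi (fun i => 𝓝ˢ (K i)) ≤ 𝓝ˢ (univ.pi K) := by
  refine Filter.le_iff_ultrafilter.2 fun 𝒰 h𝒰 => ?_
  choose p hpK hp using fun i => exists_mem_ultrafilter_le_nhds_of_le_nhdsSet (hK i)
    (𝒰 := 𝒰.map (Function.eval i)) ((Filter.le_pi.1 h𝒰) i)
  have h𝒰p : ↑𝒰 ≤ 𝓝 p := by
    rw [nhds_pi]
    exact Filter.le_pi.2 hp
  exact h𝒰p.trans (nhds_le_nhdsSet fun i _ => hpK i)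

theorem exists_forall_of_forall_exists_update {α : Type*} [Nonempty α] {P : ℕ → (ℕ → α) → Prop}
    (hcongr : ∀ n s t, (∀ i < n, s i = t i) → P n s → P n t) (hzero : ∀ s, P 0 s)
    (hsucc : ∀ n s, P n s → ∃ a, P (n + 1) (Function.update s n a)) : ∃ s, ∀ n, P n s := by
  choose! a ha using hsucc
  let approx : ℕ → ℕ → α := fun n =>
    Nat.rec (Classical.arbitrary _) (fun n s => Function.update s n (a n s)) n
  have happrox : ∀ n, P n (approx n) := fun n => by
    induction n with
    | zero => exact hzero _
    | succ n ih => exact ha n _ ih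
  have hstable : ∀ i n, i + 1 ≤ n → approx n i = approx (i + 1) i := fun i n hin => by
    induction n, hin using Nat.le_induction with
    | base => rfl
    | succ n hin ih => exact (Function.update_of_ne (Nat.lt_of_succ_le hin).ne _ _).trans ih
  exact ⟨fun i => approx (i + 1) i, fun n => hcongr n _ _ (fun i hi => hstable i n hi) (happrox n)⟩

section AlsterPower

open TopologicalSpace

variable {ι X : Type*} [TopologicalSpace X] {W : ι → Set (ℕ → X)}

/-- Countably many members of `W` cover a set of the form `G 0 × ⋯ × G (n - 1) × X × X × ⋯`, where
`G i` is a `Gδ` set containing the compact set `K i`. -/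
def CountablyCoveredNear (W : ι → Set (ℕ → X)) (n : ℕ) (K : ℕ → Compacts X) : Prop :=
  ∃ G : ℕ → Set X, (∀ i < n, IsGδ (G i) ∧ ↑(K i) ⊆ G i) ∧ IsCountablyCovered W ((Iio n).pi G)

theorem AlsterSpace.countablyCoveredNear_of_forall_update (hX : AlsterSpace X) {n : ℕ}
    {K : ℕ → Compacts X}
    (h : ∀ C, CountablyCoveredNear W (n + 1) (Function.update K n C)) :
    CountablyCoveredNear W n K := by
  choose G hG hW using h
  obtain ⟨d, hd, hdX⟩ := hX (fun C => G C n) fun C => by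
    simpa only [Function.update_self] using hG C n n.lt_succ_self
  refine ⟨fun i => ⋂ C ∈ d, G C i, fun i hi => ?_,
    (IsCountablyCovered.biUnion hd fun C _ => hW C).mono fun p hp => ?_⟩
  · have hGi := fun C => hG C i (hi.trans n.lt_succ_self)
    simp only [Function.update_of_ne hi.ne] at hGi
    exact ⟨IsGδ.biInter hd fun C _ => (hGi C).1, subset_iInter₂ fun C _ => (hGi C).2⟩
  · obtain ⟨C, hC, hpC⟩ := mem_iUnion₂.1 (hdX (mem_univ (p n)))
    refine mem_iUnion₂.2 ⟨C, hC, fun i hi => ?_⟩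
    rcases Nat.lt_succ_iff_lt_or_eq.1 hi with hin | rfl
    · exact mem_iInter₂.1 (hp i hin) C hC
    · exact hpC

theorem exists_countablyCoveredNear (hW : ∀ j, IsOpen (W j)) (hcov : ⋃ j, W j = Set.univ)
    (K : ℕ → Compacts X) : ∃ n, CountablyCoveredNear W n K := by
  obtain ⟨t, ht⟩ := (isCompact_univ_pi fun i => (K i).isCompact).elim_finite_subcover W hW
    (hcov ▸ subset_univ _)
  have hO : ⋃ j ∈ t, W j ∈ Filter.pi fun i => 𝓝ˢ (K i : Set X) :=
    pi_nhdsSet_le_nhdsSet_univ_pi (fun i => (K i).isCompact)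
      ((isOpen_biUnion fun j _ => hW j).mem_nhdsSet.2 ht)
  obtain ⟨I, hI, V, hV, hVO⟩ := Filter.mem_pi.1 hO
  obtain ⟨n, hn⟩ := hI.bddAbove
  refine ⟨n + 1, fun i => interior (V i),
    fun i _ => ⟨isOpen_interior.isGδ, subset_interior_iff_mem_nhdsSet.2 (hV i)⟩,
    t, t.countable_toSet, fun p hp => hVO fun i hi => ?_⟩
  exact interior_subset (hp i (Nat.lt_succ_of_le (hn hi)))

theorem AlsterSpace.lindelofSpace_nat_pi (hX : AlsterSpace X) : LindelofSpace (ℕ → X) := by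
  refine ⟨isLindelof_of_countable_subcover fun {ι} W hW hcov => ?_⟩
  by_contra hno
  have hcongr : ∀ n (K L : ℕ → Compacts X), (∀ i < n, K i = L i) →
      ¬ CountablyCoveredNear W n K → ¬ CountablyCoveredNear W n L := by
    rintro n K L hKL hK ⟨G, hG, hGW⟩
    exact hK ⟨G, fun i hi => hKL i hi ▸ hG i hi, hGW⟩
  have hzero : ∀ K, ¬ CountablyCoveredNear W 0 K := by
    rintro K ⟨G, -, c, hc, hcW⟩
    exact hno ⟨c, hc, fun p _ => hcW fun i hi => absurd hi i.not_lt_zero⟩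
  obtain ⟨K, hK⟩ := exists_forall_of_forall_exists_update hcongr hzero fun n K hK =>
    not_forall.1 (mt hX.countablyCoveredNear_of_forall_update hK)
  obtain ⟨n, hn⟩ := exists_countablyCoveredNear hW (univ_subset_iff.1 hcov) K
  exact hK n hn

end AlsterPower

/-- The basic open sets of a power of `X` whose sides are cozero sets. -/
def cozeroBox {J X : Type*} [TopologicalSpace X] (I : Finset J) (g : J → C(X, unitInterval)) :
    Set (J → X) :=
  {q | ∀ i ∈ I, 0 < g i (q i)}

theorem isOpen_cozeroBox {J X : Type*} [TopologicalSpace X] (I : Finset J)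
    (g : J → C(X, unitInterval)) : IsOpen (cozeroBox I g) :=
  isOpen_set_pi I.finite_toSet fun i _ => isOpen_lt continuous_const (g i).continuous

theorem exists_mem_cozeroBox_subset {J X : Type*} [TopologicalSpace X] [CompletelyRegularSpace X]
    {U : Set (J → X)} (hU : IsOpen U) {p : J → X} (hp : p ∈ U) :
    ∃ I g, p ∈ cozeroBox I g ∧ cozeroBox I g ⊆ U := by
  obtain ⟨I, V, hV, hVU⟩ := isOpen_pi_iff.1 hU p hp
  have hcozero : ∀ i, ∃ g : C(X, unitInterval), i ∈ I → 0 < g (p i) ∧ ∀ x, 0 < g x → x ∈ V i := by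
    intro i
    by_cases hi : i ∈ I
    · obtain ⟨f, hf, hfp, hfV⟩ :=
        CompletelyRegularSpace.completely_regular_isOpen (p i) (V i) (hV i hi).1 (hV i hi).2
      refine ⟨⟨unitInterval.symm ∘ f, unitInterval.continuous_symm.comp hf⟩, fun _ => ⟨?_, ?_⟩⟩
      · simp [hfp]
      · intro x hx
        by_contra hxV
        simp [hfV hxV] at hx
    · exact ⟨ContinuousMap.const X 0, fun h => absurd h hi⟩
  choose g hg using hcozero
  exact ⟨I, g, fun i hi => (hg i hi).1, fun q hq => hVU fun i hi => (hg i hi).2 _ (hq i hi)⟩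

theorem LindelofNumberLE.exists_continuous_surjective_refinement {X : Type u} [TopologicalSpace X]
    [CompletelyRegularSpace X] {κ : Cardinal.{u}} (hκ : ℵ₀ ≤ κ) (hl : LindelofNumberLE (ℕ → X) κ)
    {𝒰 : Set (Set (ℕ → X))} (h𝒰 : ∀ U ∈ 𝒰, IsOpen U) (hcov : ⋃₀ 𝒰 = Set.univ) :
    ∃ ι : Type u, #ι ≤ κ ∧ ∃ (R : Set (ι → unitInterval)) (f : X → R), Continuous f ∧
      Function.Surjective f ∧ ∃ W : 𝒰 → Set (ℕ → R), (∀ U, IsOpen (W U)) ∧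
        ⋃ U, W U = Set.univ ∧ ∀ U, (f ∘ ·) ⁻¹' W U ⊆ U := by
  obtain ⟨𝒱, h𝒱, h𝒱κ, hcov𝒱⟩ := hl {V | ∃ I g, V = cozeroBox I g ∧ ∃ U : 𝒰, V ⊆ U}
    (by rintro _ ⟨I, g, rfl, -⟩; exact isOpen_cozeroBox I g)
    (eq_univ_of_forall fun p => by
      obtain ⟨U, hU, hpU⟩ := mem_sUnion.1 (hcov ▸ mem_univ p)
      obtain ⟨I, g, hp, hIg⟩ := exists_mem_cozeroBox_subset (h𝒰 U hU) hpU
      exact ⟨_, ⟨I, g, rfl, ⟨U, hU⟩, hIg⟩, hp⟩)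
  choose I g hV U hVU using fun V : 𝒱 => h𝒱 V.2
  let F : X → 𝒱 × ℕ → unitInterval := fun x (V, i) => g V i x
  have hF : Continuous F := continuous_pi fun v => (g v.1 v.2).continuous
  let box : 𝒱 → Set (ℕ → range F) := fun V => {p | ∀ i ∈ I V, 0 < (p i).1 (V, i)}
  have hbox : ∀ V, IsOpen (box V) := fun V =>
    isOpen_set_pi (I V).finite_toSet (s := fun i => {y : range F | 0 < y.1 (V, i)}) fun i _ =>
      isOpen_lt continuous_const ((continuous_apply _).comp continuous_subtype_val)
  have hbox_iff : ∀ (V : 𝒱) q, rangeFactorization F ∘ q ∈ box V ↔ q ∈ V.1 :=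
    fun V q => by rw [hV V]; rfl
  refine ⟨𝒱 × ℕ, ?_, range F, rangeFactorization F, hF.rangeFactorization,
    rangeFactorization_surjective, fun U' => ⋃ V ∈ U ⁻¹' {U'}, box V,
    fun _ => isOpen_biUnion fun V _ => hbox V, eq_univ_of_forall fun p => ?_, fun U' q hq => ?_⟩
  · rw [Cardinal.mk_prod, Cardinal.lift_uzero, Cardinal.mk_nat, Cardinal.lift_aleph0]
    exact Cardinal.mul_le_of_le hκ h𝒱κ hκ
  · obtain ⟨q, rfl⟩ := (rangeFactorization_surjective (f := F)).comp_left p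
    obtain ⟨V, hV𝒱, hqV⟩ := mem_sUnion.1 (hcov𝒱 ▸ mem_univ q)
    exact mem_iUnion.2 ⟨U ⟨V, hV𝒱⟩, mem_iUnion₂.2 ⟨⟨V, hV𝒱⟩, rfl, (hbox_iff _ q).2 hqV⟩⟩
  · obtain ⟨V, rfl, hqV⟩ := mem_iUnion₂.1 hq
    exact hVU V ((hbox_iff V q).1 hqV)

theorem exists_countable_subset_sUnion_eq_univ_of_preimage_subset {P Y : Type*}
    [TopologicalSpace Y] [LindelofSpace Y] {F : P → Y} {𝒰 : Set (Set P)} {W : 𝒰 → Set Y}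
    (hW : ∀ U, IsOpen (W U)) (hcov : ⋃ U, W U = Set.univ) (hF : ∀ U, F ⁻¹' W U ⊆ U) :
    ∃ 𝒱 ⊆ 𝒰, 𝒱.Countable ∧ ⋃₀ 𝒱 = Set.univ := by
  obtain ⟨c, hc, hcW⟩ := isLindelof_univ.elim_countable_subcover W hW hcov.ge
  refine ⟨Subtype.val '' c, Subtype.coe_image_subset 𝒰 c, hc.image _,
    eq_univ_of_forall fun q => ?_⟩
  obtain ⟨U, hU, hqU⟩ := mem_iUnion₂.1 (hcW (mem_univ (F q)))
  exact ⟨U, mem_image_of_mem _ hU, hF U hqU⟩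

theorem continuum_eq_aleph_one_lift (h : Cardinal.continuum.{v} = Cardinal.aleph 1) :
    Cardinal.continuum.{u} = Cardinal.aleph 1 := by
  have h1 := congrArg Cardinal.lift.{u, v} h
  apply Cardinal.lift_injective.{v, u}
  simpa using h1

/-- Under CH, every productively Lindelöf space X with
ℓ(X^ω) ≤ 𝔠 is powerfully Lindelöf. -/
theorem stmt3 (hCH : Cardinal.continuum = Cardinal.aleph 1)
    (X : Type u) [TopologicalSpace X]
    (hprod : ProductivelyLindelofSp X)
    (hl : LindelofNumberLE (ℕ → X) Cardinal.continuum) :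
    PowerfullyLindelofSp X := by
  obtain ⟨hreg, hT1, hquasi⟩ := hprod.engLindelofSp
  have : LindelofSpace X := quasiLindelofSp_iff_lindelofSpace.1 hquasi
  refine ⟨inferInstance, inferInstance, fun 𝒰 h𝒰 hcov => ?_⟩
  obtain ⟨ι, hι, R, f, hf, hfsurj, W, hW, hWcov, hfW⟩ :=
    hl.exists_continuous_surjective_refinement Cardinal.aleph0_le_continuum h𝒰 hcov
  have hR : ProductivelyLindelofSp R := hprod.of_continuous_surjective hf hfsurj
  have hweight : WeightLE (ι → unitInterval) Cardinal.continuum :=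
    weightLE_pi_of_secondCountable Cardinal.aleph0_le_continuum hι
  have hZ : #{E : Set (ι → unitInterval) // IsClosedGδ E} ≤ Cardinal.aleph 1 :=
    (mk_isClosedGδ_le hweight).trans (continuum_eq_aleph_one_lift hCH).le
  have : LindelofSpace (ℕ → R) := (hR.alsterSpace hZ).lindelofSpace_nat_pi
  exact exists_countable_subset_sUnion_eq_univ_of_preimage_subset hW hWcov hfW
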